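/- arXiv:2501.03869 — 8 statements merged into one kernel-verified Lean document; each statement's English description precedes it below -/
import Mathlib

section
/- Let n ≥ 1 and let G be a symmetric n×n integer matrix with det G ≠ 0. On V = ℚ^n × ℚ consider the symmetric bilinear form B((x,s),(y,t)) = xᵀGy + 3·s·t, and let L₀ = ℤ^n × ℤ ⊆ V. Then the following are equivalent: (i) there exists a ℤ-submodule M of V with L₀ strictly contained in M, with B(u,w) ∈ ℤ for all u,w ∈ M, and with M ∩ (ℚ^n × {0}) = ℤ^n × {0}; (ii) there exists ω ∈ ℤ^n such that 3 divides ωᵀGx for every x ∈ ℤ^n and ωᵀGω ≡ −3 (mod 9). -/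
open Matrix

/-!
The glue of an overlattice `M` is generated by one vector `(ω / 3, 1 / 3)`.

Given `M` and a non-integral `(x, s) ∈ M`, pairing with `(0, 1)` shows `k := 3 s ∈ ℤ`, so
`3 (x, s) - (0, k) = (3 x, 0) ∈ M` and primitivity makes `ω := 3 x` integral. Primitivity also
forbids `3 ∣ k`, as otherwise `(x, 0) ∈ M` would force `(x, s)` to be integral. Pairing `(x, s)` with
`ℤⁿ` gives the divisibility of `ω ⬝ᵥ G *ᵥ y` by `3`, and pairing it with itself gives
`ω ⬝ᵥ G *ᵥ ω + 3 k² ≡ 0 (mod 9)`, where `k² ≡ 1 (mod 3)`.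

Conversely `M = {(y + (a / 3) ω, a / 3) | y ∈ ℤⁿ, a ∈ ℤ}` is the required overlattice.
-/

/-- The rational form takes on integral vectors the value of the integral form. -/
lemma cast_form {n : ℕ} (G : Matrix (Fin n) (Fin n) ℤ) (x y : Fin n → ℤ) :
    (fun i => (x i : ℚ)) ⬝ᵥ (G.map ((↑) : ℤ → ℚ)).mulVec (fun i => (y i : ℚ))
      = ((x ⬝ᵥ G.mulVec y : ℤ) : ℚ) := by
  simp [dotProduct, mulVec]

lemma form_comm {n : ℕ} {G : Matrix (Fin n) (Fin n) ℤ} (hsym : G.IsSymm) (x y : Fin n → ℤ) :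
    x ⬝ᵥ G.mulVec y = y ⬝ᵥ G.mulVec x := by
  rw [dotProduct_mulVec, ← mulVec_transpose, hsym.eq, dotProduct_comm]

/-- The lattice generated by `ℤⁿ × ℤ` and `(ω / 3, 1 / 3)`. The integer `a = 3 s` determines the
second coordinate, so no separate integer summand is needed there. -/
def glue {n : ℕ} (ω : Fin n → ℤ) : Submodule ℤ ((Fin n → ℚ) × ℚ) where
  carrier := {p | ∃ (y : Fin n → ℤ) (a : ℤ),
    p = ((fun i => (y i : ℚ)) + ((a : ℚ) / 3) • (fun i => (ω i : ℚ)), (a : ℚ) / 3)}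
  zero_mem' := ⟨0, 0, by ext <;> simp⟩
  add_mem' := by
    rintro _ _ ⟨y, a, rfl⟩ ⟨z, b, rfl⟩
    refine ⟨y + z, a + b, ?_⟩
    ext <;> simp <;> ring
  smul_mem' := by
    rintro c _ ⟨y, a, rfl⟩
    refine ⟨c • y, c * a, ?_⟩
    ext <;> simp <;> ring

/-- Gluing criterion for a proper integral overlattice of `Γ ⊕ ⟨η⟩`
with `η² = 3`, in which `Γ = ℤⁿ` (with Gram matrix `G`) stays primitive. -/
theorem stmt_0 (n : ℕ) (hn : 1 ≤ n) (G : Matrix (Fin n) (Fin n) ℤ)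
    (hsym : G.IsSymm) (hdet : G.det ≠ 0) :
    (∃ M : Submodule ℤ ((Fin n → ℚ) × ℚ),
      (∀ p : (Fin n → ℚ) × ℚ,
          ((∀ i, ∃ k : ℤ, p.1 i = (k : ℚ)) ∧ (∃ k : ℤ, p.2 = (k : ℚ))) → p ∈ M) ∧
      (∃ p ∈ M, ¬ ((∀ i, ∃ k : ℤ, p.1 i = (k : ℚ)) ∧ (∃ k : ℤ, p.2 = (k : ℚ)))) ∧
      (∀ u ∈ M, ∀ w ∈ M, ∃ k : ℤ,
          u.1 ⬝ᵥ (G.map ((↑) : ℤ → ℚ)).mulVec w.1 + 3 * u.2 * w.2 = (k : ℚ)) ∧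
      (∀ x : Fin n → ℚ, (x, (0 : ℚ)) ∈ M ↔ ∀ i, ∃ k : ℤ, x i = (k : ℚ)))
    ↔
    (∃ ω : Fin n → ℤ, (∀ x : Fin n → ℤ, (3 : ℤ) ∣ ω ⬝ᵥ G.mulVec x) ∧
      ω ⬝ᵥ G.mulVec ω ≡ -3 [ZMOD 9]) := by
  constructor
  · rintro ⟨M, hL, ⟨⟨x, s⟩, hp, hnot⟩, hint, hprim⟩
    have hη (k : ℤ) : ((0 : Fin n → ℚ), (k : ℚ)) ∈ M :=
      hL _ ⟨fun i => ⟨0, by simp⟩, k, rfl⟩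
    obtain ⟨k, hk⟩ := hint _ hp _ (hη 1)
    replace hk : 3 * s = k := by simpa using hk
    have h3x : ((3 : ℚ) • x, (0 : ℚ)) ∈ M := by
      have h := M.sub_mem (M.smul_mem 3 hp) (hη k)
      convert h using 1
      ext
      · simp
      · simp [hk]
    choose ω hω using (hprim _).1 h3x
    have hx : x = (1 / 3 : ℚ) • (fun i => (ω i : ℚ)) := by
      ext i
      simp [← hω]
    have hk3 : ¬ (3 : ℤ) ∣ k := by
      rintro ⟨m, rfl⟩
      have hs : s = m := by push_cast at hk; linarith
      refine hnot ⟨(hprim x).1 ?_, m, hs⟩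
      have h := M.sub_mem hp (hη m)
      simpa [hs] using h
    refine ⟨ω, fun y => ?_, ?_⟩
    · obtain ⟨m, hm⟩ := hint _ hp _ ((hprim (fun i => (y i : ℚ))).2 fun i => ⟨y i, rfl⟩)
      simp only [hx, smul_dotProduct, cast_form, smul_eq_mul] at hm
      refine ⟨m, ?_⟩
      have : ((ω ⬝ᵥ G.mulVec y : ℤ) : ℚ) = 3 * m := by linarith
      exact_mod_cast this
    · obtain ⟨m, hm⟩ := hint _ hp _ hp
      have hs : s = k / 3 := by linarith
      simp only [hx, hs, smul_dotProduct, mulVec_smul, dotProduct_smul, cast_form,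
        smul_eq_mul] at hm
      have h9 : ω ⬝ᵥ G.mulVec ω + 3 * (k * k) = 9 * m := by
        have : ((ω ⬝ᵥ G.mulVec ω : ℤ) : ℚ) + 3 * (k * k) = 9 * m := by linarith
        exact_mod_cast this
      have hkk : k * k % 3 = 1 := by
        have : k % 3 = 1 ∨ k % 3 = 2 := by omega
        rcases this with h | h <;> simp [Int.mul_emod, h]
      unfold Int.ModEq
      omega
  · rintro ⟨ω, hdvd, hmod⟩
    refine ⟨glue ω, ?_, ?_, ?_, ?_⟩
    · rintro ⟨x, s⟩ ⟨hx, k, hk⟩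
      choose z hz using hx
      refine ⟨z - k • ω, 3 * k, ?_⟩
      ext
      · simp_all
      · simp_all
    · refine ⟨_, ⟨0, 1, rfl⟩, ?_⟩
      rintro ⟨-, k, hk⟩
      have : (1 : ℚ) = 3 * k := by
        rw [← hk]
        norm_num
      have : (1 : ℤ) = 3 * k := by exact_mod_cast this
      omega
    · rintro _ ⟨y, a, rfl⟩ _ ⟨z, b, rfl⟩
      obtain ⟨c, hc⟩ := hdvd y
      obtain ⟨d, hd⟩ := hdvd z
      obtain ⟨e, he⟩ := hmod.symm.dvd
      have he' : ω ⬝ᵥ G.mulVec ω = 9 * e - 3 := by linarith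
      refine ⟨y ⬝ᵥ G.mulVec z + b * c + a * d + a * b * e, ?_⟩
      simp only [add_dotProduct, mulVec_add, dotProduct_add, smul_dotProduct, mulVec_smul,
        dotProduct_smul, cast_form, smul_eq_mul, form_comm hsym y ω, hc, hd, he']
      push_cast
      ring
    · intro x
      constructor
      · rintro ⟨y, a, h⟩
        obtain ⟨h1, h2⟩ := Prod.mk.inj h
        intro i
        exact ⟨y i, by simp [h1, ← h2]⟩
      · intro hx
        choose y hy using hx
        refine ⟨y, 0, ?_⟩
        ext <;> simp [hy]
end

section
/- Let n ≥ 1 and let G be a symmetric n×n integer matrix with det G ≠ 0. On V = ℚ^n × ℚ consider the symmetric bilinear form B((x,s),(y,t)) = xᵀGy + 3·s·t, and let L₀ = ℤ^n × ℤ ⊆ V. If M is a ℤ-submodule of V with L₀ strictly contained in M, with B(u,w) ∈ ℤ for all u,w ∈ M, and with M ∩ (ℚ^n × {0}) = ℤ^n × {0}, then the quotient group M/L₀ has exactly 3 elements. -/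
/-!
Pairing `w = (x, s) ∈ M` with the generator `(0, 1)` shows that `3 s` is an integer, so `w ↦ 3 s mod 3`
is a homomorphism `M → ℤ/3`. If `3 ∣ 3 s` then `s` is an integer, hence `(x, 0) ∈ M`, and primitivity
forces `x` to be integral: the kernel is exactly `L₀`. As `L₀ ≠ M` the homomorphism is nonzero, and it is
surjective because any nonzero element generates `ℤ/3`; so `M / L₀ ≃ ℤ/3`.
-/

open Matrix

/-- The standard integral lattice `ℤⁿ × ℤ` inside `ℚⁿ × ℚ`, as a `ℤ`-submodule. -/
def intPoints (n : ℕ) : Submodule ℤ ((Fin n → ℚ) × ℚ) :=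
  Submodule.span ℤ {p : (Fin n → ℚ) × ℚ |
    (∀ i, ∃ k : ℤ, p.1 i = (k : ℚ)) ∧ (∃ k : ℤ, p.2 = (k : ℚ))}

theorem mem_intPoints_iff {n : ℕ} {p : (Fin n → ℚ) × ℚ} :
    p ∈ intPoints n ↔ (∀ i, ∃ k : ℤ, p.1 i = (k : ℚ)) ∧ (∃ k : ℤ, p.2 = (k : ℚ)) := by
  refine ⟨fun h => ?_, fun h => Submodule.subset_span h⟩
  induction h using Submodule.span_induction with
  | mem x hx => exact hx
  | zero => exact ⟨fun i => ⟨0, by simp⟩, ⟨0, by simp⟩⟩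
  | add x y _ _ hx hy =>
    obtain ⟨hx1, a, ha⟩ := hx
    obtain ⟨hy1, b, hb⟩ := hy
    refine ⟨fun i => ?_, a + b, by simp [ha, hb]⟩
    obtain ⟨c, hc⟩ := hx1 i
    obtain ⟨d, hd⟩ := hy1 i
    exact ⟨c + d, by simp [hc, hd]⟩
  | smul m x _ hx =>
    obtain ⟨hx1, a, ha⟩ := hx
    refine ⟨fun i => ?_, m * a, by simp [ha]⟩
    obtain ⟨c, hc⟩ := hx1 i
    exact ⟨m * c, by simp [hc]⟩

/-- Any proper integral overlattice of `L₀ = ℤⁿ × ℤ` (with the form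
`B((x,s),(y,t)) = xᵀGy + 3st`) in which `ℤⁿ × {0}` stays primitive has index 3 over `L₀`. -/
theorem stmt_1 (n : ℕ) (hn : 1 ≤ n) (G : Matrix (Fin n) (Fin n) ℤ)
    (hsym : G.IsSymm) (hdet : G.det ≠ 0)
    (M : Submodule ℤ ((Fin n → ℚ) × ℚ))
    (hlt : intPoints n < M)
    (hint : ∀ u ∈ M, ∀ w ∈ M, ∃ k : ℤ,
        u.1 ⬝ᵥ (G.map ((↑) : ℤ → ℚ)).mulVec w.1 + 3 * u.2 * w.2 = (k : ℚ))
    (hprim : ∀ x : Fin n → ℚ, (x, (0 : ℚ)) ∈ M ↔ ∀ i, ∃ k : ℤ, x i = (k : ℚ)) :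
    Nat.card (↥M ⧸ Submodule.comap M.subtype (intPoints n)) = 3 := by
  have hη : ((0 : Fin n → ℚ), (1 : ℚ)) ∈ M :=
    hlt.le (mem_intPoints_iff.2 ⟨fun i => ⟨0, by simp⟩, 1, by simp⟩)
  have h3 : ∀ w : M, ∃ k : ℤ, 3 * w.1.2 = (k : ℚ) := fun w => by
    simpa using hint _ hη w.1 w.2
  choose f hf using h3
  have hf_add : ∀ u w : M, f (u + w) = f u + f w := fun u w => by
    have h : ((f (u + w) : ℤ) : ℚ) = ((f u + f w : ℤ) : ℚ) := by
      push_cast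
      rw [← hf, ← hf, ← hf, Submodule.coe_add, Prod.snd_add, mul_add]
    exact_mod_cast h
  let g : M →ₗ[ℤ] ZMod 3 :=
    ((Int.castAddHom (ZMod 3)).comp (AddMonoidHom.mk' f hf_add)).toIntLinearMap
  have hg : ∀ w, g w = ((f w : ℤ) : ZMod 3) := fun w => rfl
  have hker : Submodule.comap M.subtype (intPoints n) = LinearMap.ker g := by
    ext w
    rw [Submodule.mem_comap, LinearMap.mem_ker, hg, ZMod.intCast_zmod_eq_zero_iff_dvd,
      Submodule.subtype_apply, mem_intPoints_iff]
    constructor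
    · rintro ⟨-, k, hk⟩
      refine ⟨k, ?_⟩
      have h := hf w
      rw [hk] at h
      exact_mod_cast h.symm
    · rintro ⟨k, hk⟩
      have hs : w.1.2 = (k : ℚ) := by
        have h := hf w
        rw [hk] at h
        push_cast at h
        linarith
      refine ⟨(hprim w.1.1).1 ?_, k, hs⟩
      -- Subtracting the integral multiple `k η` moves `w` into `ℚⁿ × {0}`.
      have h := M.sub_mem w.2 (M.smul_mem k hη)
      have he : w.1 - k • ((0 : Fin n → ℚ), (1 : ℚ)) = (w.1.1, 0) := by
        ext <;> simp [hs]
      rwa [he] at h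
  have hsurj : Function.Surjective g := by
    obtain ⟨w, hwM, hw⟩ := SetLike.exists_of_lt hlt
    have hne : g ⟨w, hwM⟩ ≠ 0 := fun h => hw (by
      have h' : (⟨w, hwM⟩ : M) ∈ LinearMap.ker g := h
      rw [← hker] at h'
      exact h')
    have : Fact (Nat.Prime 3) := ⟨Nat.prime_three⟩
    intro c
    -- In the field `ℤ/3`, the multiple of `w` by a lift of `c / g w` is sent to `c`.
    refine ⟨(c / g ⟨w, hwM⟩).val • ⟨w, hwM⟩, ?_⟩
    rw [map_nsmul, nsmul_eq_mul, ZMod.natCast_zmod_val, div_mul_cancel₀ _ hne]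
  rw [hker, Nat.card_congr (g.quotKerEquivOfSurjective hsurj).toEquiv, Nat.card_zmod]
end

section
/- Let G33 be the 13×13 symmetric integer matrix with rows [3,1,-1,-1,-1,-1,-1,-1,-1,0,0,-1,-1]; [1,3,-1,0,1,-1,-1,0,0,1,1,1,-1]; [-1,-1,3,1,0,1,1,1,1,1,1,1,1]; [-1,0,1,3,0,1,1,1,1,-1,-1,1,1]; [-1,1,0,0,3,1,1,0,0,0,0,1,-1]; [-1,-1,1,1,1,3,1,1,1,-1,-1,0,0]; [-1,-1,1,1,1,1,3,1,1,-1,0,0,0]; [-1,0,1,1,0,1,1,3,1,1,1,0,0]; [-1,0,1,1,0,1,1,1,3,0,1,1,0]; [0,1,1,-1,0,-1,-1,1,0,4,2,1,0]; [0,1,1,-1,0,-1,0,1,1,2,4,1,0]; [-1,1,1,1,1,0,0,0,1,1,1,3,0]; [-1,-1,1,1,-1,0,0,0,0,0,0,0,3], and let e₁ ∈ ℤ^13 be the first standard basis vector. Then G33 is positive definite, the set S = {α ∈ ℤ^13 : αᵀ·G33·α = 3 and αᵀ·G33·e₁ = 1} is finite with exactly 81 elements, and S generates ℤ^13 as a ℤ-module.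 -/
open Matrix

/-!
Completing squares (the rational Cholesky decomposition of `G33`) gives
`59033520 • q(v) = ∑ cᵢ (sᵢ vᵢ + ∑_{j > i} uᵢⱼ vⱼ)²`, where `q(v) = vᵀ G33 v` and all `cᵢ`, `sᵢ` are
positive integers. Positive definiteness follows: if all the squares vanish, then so do the
coordinates, from the last one to the first.

The same decomposition makes the vectors with `q(v) ≤ 3` a finite tree (Fincke–Pohst enumeration):
the coordinates are chosen from the last one to the first, and at each stage the squares already
determined must not exceed the total, which leaves an explicit interval for the next coordinate.
`mem_fpEnum` shows that this search finds exactly the vectors it should. The tree has fewer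
than two thousand nodes, so the kernel evaluates it and counts the leaves with `q(α) = 3` and
`α · e₁ = 1`.

For generation, thirteen of the 81 vectors form a matrix with an explicit integral inverse.
-/

def G33 : Matrix (Fin 13) (Fin 13) ℤ :=
  !![3, 1, -1, -1, -1, -1, -1, -1, -1, 0, 0, -1, -1;
    1, 3, -1, 0, 1, -1, -1, 0, 0, 1, 1, 1, -1;
    -1, -1, 3, 1, 0, 1, 1, 1, 1, 1, 1, 1, 1;
    -1, 0, 1, 3, 0, 1, 1, 1, 1, -1, -1, 1, 1;
    -1, 1, 0, 0, 3, 1, 1, 0, 0, 0, 0, 1, -1;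
    -1, -1, 1, 1, 1, 3, 1, 1, 1, -1, -1, 0, 0;
    -1, -1, 1, 1, 1, 1, 3, 1, 1, -1, 0, 0, 0;
    -1, 0, 1, 1, 0, 1, 1, 3, 1, 1, 1, 0, 0;
    -1, 0, 1, 1, 0, 1, 1, 1, 3, 0, 1, 1, 0;
    0, 1, 1, -1, 0, -1, -1, 1, 0, 4, 2, 1, 0;
    0, 1, 1, -1, 0, -1, 0, 1, 1, 2, 4, 1, 0;
    -1, 1, 1, 1, 1, 0, 0, 0, 1, 1, 1, 3, 0;
    -1, -1, 1, 1, -1, 0, 0, 0, 0, 0, 0, 0, 3]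

/-- One term `weight * (lead * x + ∑ tail * y) ^ 2` of a weighted sum of squares in triangular form,
where `x` is a coordinate and `y` lists the coordinates after it. In a search with total `N`,
`bound` is meant to be the largest value of `|lead * x + ∑ tail * y|` compatible with the term
being at most `N`. -/
structure SqTerm where
  weight : ℤ
  lead : ℤ
  bound : ℤ
  tail : List ℤ

/-- The dot product of two lists, the longer one being truncated. -/
def listDot : List ℤ → List ℤ → ℤ
  | a :: u, x :: l => a * x + listDot u l
  | _, _ => 0

/-- The weighted sum of squares attached to a list of terms, the `i`-th term having the `i`-th
coordinate as its leading one. -/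
def sqSum : List SqTerm → List ℤ → ℤ
  | t :: ts, x :: l => t.weight * (t.lead * x + listDot t.tail l) ^ 2 + sqSum ts l
  | _, _ => 0

/-- The integers `a, …, b` in increasing order. -/
def intRange (a b : ℤ) : List ℤ :=
  (List.range (b - a + 1).toNat).map fun k : ℕ => a + (k : ℤ)

/-- Fincke–Pohst enumeration: the vectors `l` with `sqSum ts l ≤ N`, each paired with the
slack `N - sqSum ts l`. -/
def fpEnum (N : ℤ) : List SqTerm → List (List ℤ × ℤ)
  | [] => [([], N)]
  | t :: ts => (fpEnum N ts).flatMap fun p =>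
      let m := listDot t.tail p.1
      ((intRange (-((t.bound + m) / t.lead)) ((t.bound - m) / t.lead)).map fun x =>
        (x :: p.1, p.2 - t.weight * (t.lead * x + m) ^ 2)).filter fun r => decide (0 ≤ r.2)

lemma mem_intRange {a b x : ℤ} : x ∈ intRange a b ↔ a ≤ x ∧ x ≤ b := by
  simp only [intRange, List.mem_map, List.mem_range]
  constructor
  · rintro ⟨k, hk, rfl⟩
    omega
  · rintro ⟨h1, h2⟩
    exact ⟨(x - a).toNat, by omega, by omega⟩

lemma sqSum_nonneg (ts : List SqTerm) (h : ∀ t ∈ ts, 0 < t.weight) (l : List ℤ) :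
    0 ≤ sqSum ts l := by
  induction ts generalizing l with
  | nil => simp [sqSum]
  | cons t ts ih =>
    cases l with
    | nil => simp [sqSum]
    | cons x l =>
      have h1 := ih (fun t ht => h t (List.mem_cons_of_mem _ ht)) l
      have h2 := h t List.mem_cons_self
      simp only [sqSum]
      positivity

lemma listDot_eq_zero (u l : List ℤ) (h : ∀ x ∈ l, x = 0) : listDot u l = 0 := by
  induction u generalizing l with
  | nil => simp [listDot]
  | cons a u ih =>
    cases l with
    | nil => simp [listDot]
    | cons x l =>
      simp only [listDot, ih l fun y hy => h y (List.mem_cons_of_mem _ hy),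
        h x List.mem_cons_self, mul_zero, add_zero]

lemma eq_zero_of_sqSum_nonpos (ts : List SqTerm) (h : ∀ t ∈ ts, 0 < t.weight ∧ 0 < t.lead)
    (l : List ℤ) (hl : l.length = ts.length) (h0 : sqSum ts l ≤ 0) : ∀ x ∈ l, x = 0 := by
  induction ts generalizing l with
  | nil => simp_all
  | cons t ts ih =>
    cases l with
    | nil => simp
    | cons x l =>
      obtain ⟨hw, hs⟩ := h t List.mem_cons_self
      have hts : ∀ t ∈ ts, 0 < t.weight ∧ 0 < t.lead :=
        fun t ht => h t (List.mem_cons_of_mem _ ht)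
      have hnn := sqSum_nonneg ts (fun t ht => (hts t ht).1) l
      simp only [sqSum] at h0
      have hsq : 0 ≤ t.weight * (t.lead * x + listDot t.tail l) ^ 2 := by positivity
      have hl0 := ih hts l (by simpa using hl) (by linarith)
      have hx : t.weight * (t.lead * x + listDot t.tail l) ^ 2 = 0 := by linarith
      rw [listDot_eq_zero _ _ hl0] at hx
      have hx0 : x = 0 := by simpa [hw.ne', hs.ne'] using hx
      simpa [hx0] using hl0

/-- Correctness of the enumeration. -/
lemma mem_fpEnum (N : ℤ) (hN : 0 ≤ N) (ts : List SqTerm)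
    (h : ∀ t ∈ ts, 0 < t.weight ∧ 0 < t.lead ∧ 0 ≤ t.bound ∧
      N < t.weight * (t.bound + 1) ^ 2) (l : List ℤ) (r : ℤ) :
    (l, r) ∈ fpEnum N ts ↔ l.length = ts.length ∧ r = N - sqSum ts l ∧ 0 ≤ r := by
  induction ts generalizing l r with
  | nil =>
    simp only [fpEnum, List.mem_singleton, Prod.mk.injEq, List.length_nil,
      List.length_eq_zero_iff, sqSum, sub_zero]
    constructor
    · rintro ⟨rfl, rfl⟩
      exact ⟨rfl, rfl, hN⟩
    · rintro ⟨h1, h2, -⟩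
      exact ⟨h1, h2⟩
  | cons t ts ih =>
    obtain ⟨hw, hs, hb, hT⟩ := h t List.mem_cons_self
    have hts := fun t ht => h t (List.mem_cons_of_mem _ ht)
    simp only [fpEnum, List.mem_flatMap, List.mem_filter, List.mem_map, decide_eq_true_eq,
      Prod.exists, Prod.mk.injEq]
    constructor
    · rintro ⟨l', r', hmem, ⟨x, -, rfl, rfl⟩, hr⟩
      obtain ⟨h1, h2, -⟩ := (ih hts l' r').1 hmem
      refine ⟨by simp [h1], ?_, hr⟩
      rw [h2]
      simp only [sqSum]
      ring
    · rintro ⟨hlen, hr, hr0⟩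
      cases l with
      | nil => simp at hlen
      | cons x l =>
        have hnn := sqSum_nonneg ts (fun t ht => (hts t ht).1) l
        simp only [sqSum] at hr
        have hsq : 0 ≤ t.weight * (t.lead * x + listDot t.tail l) ^ 2 := by positivity
        refine ⟨l, N - sqSum ts l,
          (ih hts l _).2 ⟨by simpa using hlen, rfl, by linarith⟩,
          ⟨x, mem_intRange.2 ?_, rfl, by rw [hr]; ring⟩, hr0⟩
        have hlt : (t.lead * x + listDot t.tail l) ^ 2 < (t.bound + 1) ^ 2 :=
          lt_of_mul_lt_mul_left (by linarith) hw.le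
        obtain ⟨h1, h2⟩ := abs_lt.1 (abs_lt_of_sq_lt_sq hlt (by linarith))
        constructor
        · rw [neg_le, Int.le_ediv_iff_mul_le hs]
          linarith
        · rw [Int.le_ediv_iff_mul_le hs]
          linarith

/-- The Cholesky decomposition of `59033520 • G33`; the bounds are those for the total
`3 * 59033520`. -/
def cholesky : List SqTerm :=
  [⟨19677840, 3, 3, [1, -1, -1, -1, -1, -1, -1, -1, 0, 0, -1, -1]⟩,
   ⟨2459730, 8, 8, [-2, 1, 4, -2, -2, 1, 1, 3, 3, 4, -2]⟩,
   ⟨1475838, 10, 10, [3, 0, 2, 2, 3, 3, 5, 5, 4, 2]⟩,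
   ⟨245973, 24, 26, [-5, 6, 6, 4, 4, -15, -15, 2, 6]⟩,
   ⟨13515, 91, 114, [54, 54, -20, -20, -39, -39, 2, -42]⟩,
   ⟨4505, 144, 198, [-38, 68, 68, -13, -13, -25, -21]⟩,
   ⟨7735, 106, 151, [68, 68, -13, 59, -25, -21]⟩,
   ⟨16380, 68, 103, [-38, 40, 6, -25, -21]⟩,
   ⟨520884, 10, 18, [2, 2, 3, -7]⟩,
   ⟨4427514, 4, 6, [-1, 1, 1]⟩,
   ⟨7379190, 3, 4, [1, 1]⟩,
   ⟨14758380, 2, 3, [-1]⟩,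
   ⟨44275140, 1, 2, []⟩]

lemma sqSum_cholesky (v : Fin 13 → ℤ) :
    sqSum cholesky (List.ofFn v) = 59033520 * (v ⬝ᵥ G33.mulVec v) := by
  simp [sqSum, cholesky, listDot, List.ofFn_succ, G33, dotProduct, mulVec, Fin.sum_univ_succ]
  ring

lemma dot_eta (v : Fin 13 → ℤ) : v ⬝ᵥ G33.mulVec (Pi.single 0 1) =
    listDot [3, 1, -1, -1, -1, -1, -1, -1, -1, 0, 0, -1, -1] (List.ofFn v) := by
  simp [listDot, List.ofFn_succ, G33, dotProduct, Fin.sum_univ_succ]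
  ring

lemma cholesky_good : ∀ t ∈ cholesky, 0 < t.weight ∧ 0 < t.lead ∧ 0 ≤ t.bound ∧
    3 * 59033520 < t.weight * (t.bound + 1) ^ 2 := by
  simp [cholesky]

/-- The classes of planes: vectors of norm `3` that pair to `1` with the first basis vector. -/
def planeClasses : Set (Fin 13 → ℤ) :=
  {α | α ⬝ᵥ G33.mulVec α = 3 ∧ α ⬝ᵥ G33.mulVec (Pi.single 0 1) = 1}

/-- The coordinate lists of the plane classes, as found by the enumeration. -/
def planeLists : List (List ℤ) :=
  ((fpEnum (3 * 59033520) cholesky).filter fun p =>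
    decide (p.2 = 0 ∧
      listDot [3, 1, -1, -1, -1, -1, -1, -1, -1, 0, 0, -1, -1] p.1 = 1)).map Prod.fst

lemma image_planeClasses :
    List.ofFn '' planeClasses = (planeLists.toFinset : Set (List ℤ)) := by
  ext l
  simp only [Set.mem_image, planeClasses, Set.mem_ofPred_eq, List.coe_toFinset, planeLists,
    List.mem_map, List.mem_filter, decide_eq_true_eq, Prod.exists, exists_and_right,
    exists_eq_right, mem_fpEnum _ (by norm_num) _ cholesky_good]
  constructor
  · rintro ⟨α, ⟨h1, h2⟩, rfl⟩
    refine ⟨0, ⟨by simp [cholesky], ?_, le_rfl⟩, rfl, by rw [← dot_eta, h2]⟩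
    rw [sqSum_cholesky, h1]
    norm_num
  · rintro ⟨r, ⟨hlen, hr, -⟩, rfl, h2⟩
    obtain ⟨α, rfl⟩ : ∃ α : Fin 13 → ℤ, List.ofFn α = l := by
      have hlen' : l.length = 13 := by simpa [cholesky] using hlen
      exact ⟨fun i => l.get (i.cast hlen'.symm), List.ext_get (by rw [List.length_ofFn, hlen'])
        fun n _ _ => by rw [List.get_ofFn]; rfl⟩
    rw [sqSum_cholesky] at hr
    exact ⟨α, ⟨by linarith, by rw [dot_eta, h2]⟩, rfl⟩

lemma card_planeLists : planeLists.toFinset.card = 81 := by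
  decide +kernel

/-- The rows are thirteen plane classes forming a basis of the lattice. -/
def planeBasis : Matrix (Fin 13) (Fin 13) ℤ :=
  !![1, -1, 0, 0, 1, 0, 0, 0, 0, 0, 0, 0, 0;
    0, 1, 0, 0, 0, 0, 0, 0, 0, 0, 0, 0, 0;
    0, 0, -1, 0, 0, 0, 0, 0, 0, 0, 0, 0, 0;
    0, 0, 0, -1, 0, 0, 0, 0, 0, 0, 0, 0, 0;
    0, 0, 0, 0, -1, 0, 0, 0, 0, 0, 0, 0, 0;
    0, 0, 0, 0, 0, -1, 0, 0, 0, 0, 0, 0, 0;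
    0, 0, 0, 0, 0, 0, -1, 0, 0, 0, 0, 0, 0;
    0, 0, 0, 0, 0, 0, 0, -1, 0, 0, 0, 0, 0;
    0, 0, 0, 0, 0, 0, 0, 0, -1, 0, 0, 0, 0;
    0, 0, -1, 0, -1, 1, 1, -1, 0, 1, 0, 0, 0;
    1, -2, -1, 1, 1, 0, -1, 0, 0, 0, 1, 0, 0;
    0, 0, 0, 0, 0, 0, 0, 0, 0, 0, 0, -1, 0;
    0, 0, 0, 0, 0, 0, 0, 0, 0, 0, 0, 0, -1]

/-- The inverse of `planeBasis`. -/
def planeBasisInv : Matrix (Fin 13) (Fin 13) ℤ :=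
  !![1, 1, 0, 0, 1, 0, 0, 0, 0, 0, 0, 0, 0;
    0, 1, 0, 0, 0, 0, 0, 0, 0, 0, 0, 0, 0;
    0, 0, -1, 0, 0, 0, 0, 0, 0, 0, 0, 0, 0;
    0, 0, 0, -1, 0, 0, 0, 0, 0, 0, 0, 0, 0;
    0, 0, 0, 0, -1, 0, 0, 0, 0, 0, 0, 0, 0;
    0, 0, 0, 0, 0, -1, 0, 0, 0, 0, 0, 0, 0;
    0, 0, 0, 0, 0, 0, -1, 0, 0, 0, 0, 0, 0;
    0, 0, 0, 0, 0, 0, 0, -1, 0, 0, 0, 0, 0;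
    0, 0, 0, 0, 0, 0, 0, 0, -1, 0, 0, 0, 0;
    0, 0, -1, 0, -1, 1, 1, -1, 0, 1, 0, 0, 0;
    -1, 1, -1, 1, 0, 0, -1, 0, 0, 0, 1, 0, 0;
    0, 0, 0, 0, 0, 0, 0, 0, 0, 0, 0, -1, 0;
    0, 0, 0, 0, 0, 0, 0, 0, 0, 0, 0, 0, -1]

lemma planeBasisInv_mul : planeBasisInv * planeBasis = 1 := by
  decide +kernel

lemma planeBasis_mem : ∀ i, planeBasis i ∈ planeClasses := by
  change ∀ i, planeBasis i ⬝ᵥ G33.mulVec (planeBasis i) = 3 ∧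
    planeBasis i ⬝ᵥ G33.mulVec (Pi.single 0 1) = 1
  decide +kernel

lemma span_planeClasses : Submodule.span ℤ planeClasses = ⊤ := by
  refine eq_top_iff.2 fun v _ => ?_
  have hv : v = (v ᵥ* planeBasisInv) ᵥ* planeBasis := by
    rw [vecMul_vecMul, planeBasisInv_mul, vecMul_one]
  rw [hv, vecMul_eq_sum]
  exact Submodule.sum_mem _ fun i _ =>
    Submodule.smul_mem _ _ (Submodule.subset_span (planeBasis_mem i))

/-- `G33` (the Gram matrix of `A(X)` for a general cubic fourfold
with symplectic automorphism `φ₃³`) is positive definite; there are exactly 81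
vectors `α` with `α² = 3` and `α·η = 1` (the classes of planes), and they
generate the whole lattice. -/
theorem stmt_2 :
    (∀ v : Fin 13 → ℤ, v ≠ 0 → 0 < v ⬝ᵥ G33.mulVec v) ∧
    {α : Fin 13 → ℤ |
      α ⬝ᵥ G33.mulVec α = 3 ∧ α ⬝ᵥ G33.mulVec (Pi.single 0 1) = 1}.Finite ∧
    {α : Fin 13 → ℤ |
      α ⬝ᵥ G33.mulVec α = 3 ∧ α ⬝ᵥ G33.mulVec (Pi.single 0 1) = 1}.ncard = 81 ∧
    Submodule.span ℤ {α : Fin 13 → ℤ |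
      α ⬝ᵥ G33.mulVec α = 3 ∧ α ⬝ᵥ G33.mulVec (Pi.single 0 1) = 1} = ⊤ := by
  have hcard : planeClasses.ncard = 81 := by
    rw [← Set.ncard_image_of_injective _ List.ofFn_injective, image_planeClasses,
      Set.ncard_coe_finset, card_planeLists]
  refine ⟨fun v hv => ?_, Set.finite_of_ncard_ne_zero (s := planeClasses) (by simp [hcard]),
    hcard, span_planeClasses⟩
  by_contra! hle
  refine hv (funext fun i => ?_)
  refine eq_zero_of_sqSum_nonpos cholesky
    (fun t ht => ⟨(cholesky_good t ht).1, (cholesky_good t ht).2.1⟩) (List.ofFn v)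
    (by simp [cholesky]) ?_ (v i) (List.mem_ofFn.2 ⟨i, rfl⟩)
  rw [sqSum_cholesky]
  linarith
end

section
/- Let G33 be the 13×13 symmetric integer matrix with rows [3,1,-1,-1,-1,-1,-1,-1,-1,0,0,-1,-1]; [1,3,-1,0,1,-1,-1,0,0,1,1,1,-1]; [-1,-1,3,1,0,1,1,1,1,1,1,1,1]; [-1,0,1,3,0,1,1,1,1,-1,-1,1,1]; [-1,1,0,0,3,1,1,0,0,0,0,1,-1]; [-1,-1,1,1,1,3,1,1,1,-1,-1,0,0]; [-1,-1,1,1,1,1,3,1,1,-1,0,0,0]; [-1,0,1,1,0,1,1,3,1,1,1,0,0]; [-1,0,1,1,0,1,1,1,3,0,1,1,0]; [0,1,1,-1,0,-1,-1,1,0,4,2,1,0]; [0,1,1,-1,0,-1,0,1,1,2,4,1,0]; [-1,1,1,1,1,0,0,0,1,1,1,3,0]; [-1,-1,1,1,-1,0,0,0,0,0,0,0,3]. Then there is no vector v ∈ ℤ^13 with vᵀ·G33·v = 1. -/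
/-!
Write `w · v` for the bilinear form with Gram matrix `G33`. The lattice contains a characteristic
vector `η` with `η · η = 3`, and exactly 81 vectors `w` with `w · w = 3` and `w · η = 1`. These
`w` form a design: for all `v`, with `h = η · v`,

  `∑ w · v = 27 h` and `∑ (w · v) ^ 2 = 18 (v · v) + 3 h ^ 2`

(`sum_plane`, `sum_plane_sq`). Both are finite matrix identities.

Let `v · v = 1`. Then `h` is odd since `η` is characteristic (`even_sq_sub_eta`), and `h ^ 2 ≤ 3`
by Cauchy–Schwarz, so `h = ±1`; up to the sign of `v`, `h = 1`. The integers `w · v` then have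
sum 27, while their squares have sum only 21. This is impossible, as `m ≤ m ^ 2` for every
integer `m`.
-/

open Matrix

/-- The characteristic vector `η = h²` of square 3, encoded as the linear form `v ↦ η · v`.
Here `η` is minus the first basis vector, so this is minus the first row of `G33`. -/
def etaForm : Fin 13 → ℤ :=
  ![-3, -1, 1, 1, 1, 1, 1, 1, 1, 0, 0, 1, 1]

/-- The 81 vectors `w` with `w · w = 3` and `w · η = 1` (the classes of planes in `X`). Row `w` is
the linear form `v ↦ w · v`: it lists the products of `w` with the basis vectors, rather than the
coordinates of `w`. -/
def planeForms : Matrix (Fin 81) (Fin 13) ℤ :=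
  !![-1, 1, 1, 1, 1, 1, 0, 1, 1, 1, 1, 1, 0;
    -1, 1, 1, 1, 1, 0, 1, 1, 1, 1, 0, 1, 0;
    -1, 1, 1, 1, 1, 0, 0, 1, 0, 0, 1, 1, 0;
    -1, 1, 1, 1, 1, 0, 0, 0, 1, 1, 1, 3, 0;
    -1, 1, 1, 0, 1, 0, 0, 1, 1, 2, 2, 1, 1;
    -1, 1, 0, 1, -1, -1, -1, 1, 1, 1, 1, 1, 1;
    -1, 1, 0, 0, 3, 1, 1, 0, 0, 0, 0, 1, -1;
    -1, 1, -1, 1, 1, 0, 0, 0, 0, -1, -1, 1, -1;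
    -1, 1, -1, 0, 1, 0, 0, 1, 0, 0, 0, -1, 0;
    -1, 1, -1, 0, 1, 0, 0, 0, 1, 1, 0, 1, 0;
    -1, 1, -1, 0, 1, 0, -1, 0, 0, 0, 1, 1, 0;
    -1, 1, -1, 0, 1, -1, 0, 0, 0, 0, 0, 1, 0;
    -1, 0, 1, 3, 0, 1, 1, 1, 1, -1, -1, 1, 1;
    -1, 0, 1, 1, 0, 1, 1, 3, 1, 1, 1, 0, 0;
    -1, 0, 1, 1, 0, 1, 1, 1, 3, 0, 1, 1, 0;
    -1, 0, 1, 1, 0, 1, -1, 1, 1, 1, 0, 1, 0;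
    -1, 0, 1, 1, 0, -1, 1, 1, 1, 1, 1, 1, 0;
    -1, 0, 1, 0, 1, 1, 0, 0, 0, 0, 0, 1, 1;
    -1, 0, 1, 0, 1, 0, 1, 0, 0, 0, 2, 1, 1;
    -1, 0, 1, 0, 1, 0, 0, 0, -1, 2, 0, 1, 1;
    -1, 0, 1, 0, 1, 0, 0, -1, 0, 0, 0, 0, 1;
    -1, 0, 1, -1, 1, 0, 0, 0, 0, 1, 1, 1, -1;
    -1, 0, 0, 1, 1, 1, 1, 1, 0, 0, 0, 1, 1;
    -1, 0, 0, 1, 1, 1, 1, 0, 1, -2, 0, 0, 1;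
    -1, 0, 0, 1, 1, 1, 0, 0, 0, 0, -2, 0, 1;
    -1, 0, 0, 1, 1, 0, 1, 0, 0, 0, 0, 0, 1;
    -1, 0, 0, 1, 0, 1, 1, 1, 1, -1, 0, 0, 1;
    -1, 0, 0, 1, 0, 1, -1, 1, -1, 0, -1, 0, 1;
    -1, 0, 0, 1, 0, 1, -1, -1, 1, -1, -1, 1, 1;
    -1, 0, 0, 1, 0, -1, 1, 1, -1, 0, 0, 0, 1;
    -1, 0, 0, 1, 0, -1, 1, -1, 1, -1, 0, 1, 1;
    -1, 0, 0, 1, 0, -1, -1, -1, -1, 0, -1, 1, 1;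
    -1, 0, 0, 0, 1, 1, 1, 1, 1, -1, 1, 1, -1;
    -1, 0, 0, 0, 1, 1, 0, 1, 0, 1, -1, 1, -1;
    -1, 0, 0, 0, 1, 1, 0, 0, 1, -1, -1, 0, -1;
    -1, 0, 0, 0, 1, 0, 1, 1, 0, 1, 1, 1, -1;
    -1, 0, 0, 0, 1, 0, 1, 0, 1, -1, 1, 0, -1;
    -1, 0, 0, 0, 1, 0, 0, 0, 0, 1, -1, 0, -1;
    -1, 0, 0, -1, 0, 1, -1, 1, 1, 1, 1, 0, 0;
    -1, 0, 0, -1, 0, -1, 1, 1, 1, 1, 2, 0, 0;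
    -1, 0, 0, -1, 0, -1, -1, 1, -1, 2, 1, 0, 0;
    -1, 0, 0, -1, 0, -1, -1, -1, 1, 1, 1, 1, 0;
    -1, 0, -1, 1, 1, 1, 1, 1, 1, -1, -1, 0, -1;
    -1, 0, -1, -1, 0, -1, -1, -1, -1, 0, 0, 0, 1;
    -1, -1, 3, 1, 0, 1, 1, 1, 1, 1, 1, 1, 1;
    -1, -1, 1, 1, 1, 3, 1, 1, 1, -1, -1, 0, 0;
    -1, -1, 1, 1, 1, 1, 3, 1, 1, -1, 0, 0, 0;
    -1, -1, 1, 1, 1, 1, 1, 1, -1, 0, -1, 0, 0;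
    -1, -1, 1, 1, 1, 1, 1, -1, 1, -1, -1, 1, 0;
    -1, -1, 1, 1, 0, 1, 1, 1, 0, -1, -1, -1, 0;
    -1, -1, 1, 1, 0, 1, 1, 0, 1, 0, -1, 1, 0;
    -1, -1, 1, 1, 0, 1, 0, 0, 0, -1, 0, 1, 0;
    -1, -1, 1, 1, 0, 0, 1, 0, 0, -1, -1, 1, 0;
    -1, -1, 1, 1, -1, 0, 0, 0, 0, 0, 0, 0, 3;
    -1, -1, 1, 0, 0, 1, 1, 1, 1, 1, 0, -1, 1;
    -1, -1, 1, 0, 0, 1, 0, 1, 0, 0, 1, -1, 1;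
    -1, -1, 1, 0, 0, 1, 0, 0, 1, 1, 1, 1, 1;
    -1, -1, 1, 0, 0, 0, 1, 1, 0, 0, 0, -1, 1;
    -1, -1, 1, 0, 0, 0, 1, 0, 1, 1, 0, 1, 1;
    -1, -1, 1, 0, 0, 0, 0, 0, 0, 0, 1, 1, 1;
    -1, -1, 1, 0, -1, 0, 0, 1, 0, 1, 1, 1, 1;
    -1, -1, 1, 0, -1, 0, 0, 0, 1, -1, 1, 0, 1;
    -1, -1, 1, 0, -1, 0, -1, 0, 0, 1, -1, 0, 1;
    -1, -1, 1, 0, -1, -1, 0, 0, 0, 1, 1, 0, 1;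
    -1, -1, 1, -1, 1, 1, 1, 1, 1, 1, 1, 0, -1;
    -1, -1, 0, 1, 1, 1, 1, -1, -1, -2, -2, 0, 1;
    -1, -1, 0, 1, -1, 1, 0, 1, 1, -1, -1, 0, 1;
    -1, -1, 0, 1, -1, 0, 1, 1, 1, -1, 1, 0, 1;
    -1, -1, 0, 1, -1, 0, 0, 1, 0, 1, -1, 0, 1;
    -1, -1, 0, 1, -1, 0, 0, 0, 1, -1, -1, -1, 1;
    -1, -1, 0, 0, -1, 0, 0, 1, 1, 0, 0, 0, -1;
    -1, -1, 0, -1, 1, 1, 1, 1, -1, 0, 0, -1, 0;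
    -1, -1, 0, -1, 1, 1, 1, -1, 1, -1, 0, 0, 0;
    -1, -1, 0, -1, 1, 1, -1, -1, -1, 0, -1, 0, 0;
    -1, -1, 0, -1, 1, -1, 1, -1, -1, 0, 0, 0, 0;
    -1, -1, -1, 0, 0, 1, 0, 0, 0, -1, -1, -1, 0;
    -1, -1, -1, 0, 0, 0, 1, 0, 0, -1, -2, -1, 0;
    -1, -1, -1, 0, 0, 0, 0, 0, -1, -2, -1, -1, 0;
    -1, -1, -1, 0, 0, 0, 0, -1, 0, -1, -1, 1, 0;
    -1, -1, -1, -1, 0, 0, 0, 0, 0, 0, 0, -1, 1;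
    -1, -3, 1, 0, -1, 1, 1, 0, 0, -1, -1, -1, 1]

/-- The planes are balanced: their sum is `27 η`. -/
lemma sum_planeForms : (1 : Fin 81 → ℤ) ᵥ* planeForms = 27 • etaForm := by
  decide +kernel

/-- The planes form a tight frame on the orthogonal complement of `η`, so their second moment is a
combination of the quadratic form and the square of `etaForm`. -/
lemma planeForms_frame :
    planeFormsᵀ * planeForms = 18 • G33 + 3 • vecMulVec etaForm etaForm := by
  decide +kernel

/-- `η` is characteristic: `v · v ≡ v · η` modulo 2. -/
lemma even_sq_sub_eta (v : Fin 13 → ℤ) : Even (v ⬝ᵥ G33 *ᵥ v - etaForm ⬝ᵥ v) := by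
  -- The coordinates of `η` have the parity of the diagonal of `G33`, so `G33 - diag η = T + Tᵀ`
  -- with `T` integral.
  let T : Matrix (Fin 13) (Fin 13) ℤ :=
    of fun i j => if i < j then G33 i j else if i = j then (G33 i i - etaForm i) / 2 else 0
  have hT : G33 = T + Tᵀ + diagonal etaForm := by decide +kernel
  have hdiag : Even (v ⬝ᵥ diagonal etaForm *ᵥ v - etaForm ⬝ᵥ v) := by
    simp only [dotProduct, mulVec_diagonal, ← Finset.sum_sub_distrib]
    refine Finset.even_sum _ fun i _ => ?_
    have : v i * (etaForm i * v i) - etaForm i * v i = etaForm i * (v i * (v i - 1)) := by ring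
    rw [this]
    exact (Int.even_mul_pred_self _).mul_left _
  have htr : v ⬝ᵥ Tᵀ *ᵥ v = v ⬝ᵥ T *ᵥ v := by
    rw [mulVec_transpose, dotProduct_comm, ← dotProduct_mulVec]
  rw [hT, add_mulVec, add_mulVec, dotProduct_add, dotProduct_add, htr, add_sub_assoc]
  exact Even.add ⟨_, rfl⟩ hdiag

lemma sum_plane (v : Fin 13 → ℤ) :
    ∑ i, (planeForms *ᵥ v) i = 27 * (etaForm ⬝ᵥ v) := by
  rw [← one_dotProduct, dotProduct_mulVec, sum_planeForms, smul_dotProduct]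
  simp

lemma sum_plane_sq (v : Fin 13 → ℤ) :
    ∑ i, (planeForms *ᵥ v) i ^ 2 = 18 * (v ⬝ᵥ G33 *ᵥ v) + 3 * (etaForm ⬝ᵥ v) ^ 2 := by
  have h : ∑ i, (planeForms *ᵥ v) i ^ 2 = v ⬝ᵥ (planeFormsᵀ * planeForms) *ᵥ v := by
    rw [← mulVec_mulVec, dotProduct_mulVec v, vecMul_transpose]
    simp [dotProduct, pow_two]
  rw [h, planeForms_frame, add_mulVec, dotProduct_add, smul_mulVec, smul_mulVec,
    vecMulVec_mulVec, dotProduct_smul, dotProduct_smul, op_smul_eq_smul, dotProduct_smul,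
    dotProduct_comm v etaForm]
  simp
  ring

/-- The lattice with Gram matrix `G33` (the algebraic lattice of a
general cubic fourfold with symplectic automorphism `φ₃³`) has no vector of square 1. -/
theorem stmt_3 : ¬ ∃ v : Fin 13 → ℤ, v ⬝ᵥ G33.mulVec v = 1 := by
  rintro ⟨v, hv⟩
  have hsum := sum_plane v
  have hsq := sum_plane_sq v
  have hpar := even_sq_sub_eta v
  rw [hv] at hsq hpar
  set x := planeForms *ᵥ v
  set h := etaForm ⬝ᵥ v
  -- Integrality enters here: `m ^ 2 ± m ≥ 0` for every integer `m`, although not for real `m`.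
  have hneg : 0 ≤ ∑ i, (x i ^ 2 - x i) :=
    Finset.sum_nonneg fun i _ => by nlinarith [Int.le_self_sq (x i)]
  have hpos : 0 ≤ ∑ i, (x i ^ 2 + x i) :=
    Finset.sum_nonneg fun i _ => by nlinarith [Int.le_self_sq (-x i)]
  -- Cauchy–Schwarz for `v` and `η`
  have hcs : 0 ≤ ∑ i, (3 * x i - h) ^ 2 := Finset.sum_nonneg fun i _ => sq_nonneg _
  have hcs' : ∑ i, (3 * x i - h) ^ 2 = 9 * ∑ i, x i ^ 2 - 6 * h * ∑ i, x i + 81 * h ^ 2 := by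
    have (i : Fin 81) : (3 * x i - h) ^ 2 = 9 * x i ^ 2 - 6 * h * x i + h ^ 2 := by ring
    simp [this, Finset.sum_add_distrib, Finset.sum_sub_distrib, Finset.mul_sum]
  rw [Finset.sum_sub_distrib, hsum, hsq] at hneg
  rw [Finset.sum_add_distrib, hsum, hsq] at hpos
  rw [hcs', hsum, hsq] at hcs
  have h1 : h ≤ 1 := by nlinarith
  have h2 : -1 ≤ h := by nlinarith
  interval_cases h
  · norm_num at hpos
  · norm_num at hpar
  · norm_num at hneg
end

section
/- Let G33 be the 13×13 symmetric integer matrix with rows [3,1,-1,-1,-1,-1,-1,-1,-1,0,0,-1,-1]; [1,3,-1,0,1,-1,-1,0,0,1,1,1,-1]; [-1,-1,3,1,0,1,1,1,1,1,1,1,1]; [-1,0,1,3,0,1,1,1,1,-1,-1,1,1]; [-1,1,0,0,3,1,1,0,0,0,0,1,-1]; [-1,-1,1,1,1,3,1,1,1,-1,-1,0,0]; [-1,-1,1,1,1,1,3,1,1,-1,0,0,0]; [-1,0,1,1,0,1,1,3,1,1,1,0,0]; [-1,0,1,1,0,1,1,1,3,0,1,1,0]; [0,1,1,-1,0,-1,-1,1,0,4,2,1,0];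 [0,1,1,-1,0,-1,0,1,1,2,4,1,0]; [-1,1,1,1,1,0,0,0,1,1,1,3,0]; [-1,-1,1,1,-1,0,0,0,0,0,0,0,3]. Then the cokernel ℤ^13/(G33·ℤ^13) of the ℤ-linear map given by G33 is isomorphic, as an abelian group, to (ℤ/3ℤ)^5. -/
/-!
The vector `x` is sent to `P x` modulo 3, where the rows of `P` (`certP`) span the left kernel of
`G = G33` modulo 3. This map `discMap` onto `(ℤ/3ℤ)⁵` has kernel exactly the image of `G`, which
follows from four identities between integer matrices:

* `P S = 1`, so `discMap` is surjective;
* `P G = 3 C`, so the image of `G` lies in the kernel;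
* `S P + G A = 1` and `3 S = G B`: if `P x = 3 y`, then `x = S (P x) + G (A x) = G (B y + A x)`, so
  the kernel lies in the image of `G`.

The first isomorphism theorem concludes.
-/

open Matrix

/-- Rows form a basis of the left kernel of `G33` modulo 3, lifted to `{-1, 0, 1}`. Reduced row echelon
form is taken from the right, so that columns 8 to 12 are the identity matrix. -/
def certP : Matrix (Fin 5) (Fin 13) ℤ :=
  !![1, 0, 1, 1, 1, -1, -1, 1, 1, 0, 0, 0, 0;
    0, -1, -1, -1, -1, -1, -1, 1, 0, 1, 0, 0, 0;
    -1, 1, -1, 1, 0, 0, 1, 0, 0, 0, 1, 0, 0;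
    -1, 1, -1, 0, -1, 0, 0, -1, 0, 0, 0, 1, 0;
    -1, 0, 1, 1, 0, 0, 0, 0, 0, 0, 0, 0, 1]

/-- The inclusion of the coordinates 8 to 12, an integral right inverse of `certP`. -/
def certS : Matrix (Fin 13) (Fin 5) ℤ :=
  !![0, 0, 0, 0, 0;
    0, 0, 0, 0, 0;
    0, 0, 0, 0, 0;
    0, 0, 0, 0, 0;
    0, 0, 0, 0, 0;
    0, 0, 0, 0, 0;
    0, 0, 0, 0, 0;
    0, 0, 0, 0, 0;
    1, 0, 0, 0, 0;
    0, 1, 0, 0, 0;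
    0, 0, 1, 0, 0;
    0, 0, 0, 1, 0;
    0, 0, 0, 0, 1]

/-- The integral matrix `G33⁻¹ * (1 - certS * certP)`. -/
def certA : Matrix (Fin 13) (Fin 13) ℤ :=
  !![4, -6, -5, -4, 3, -2, -1, 3, 0, 0, 0, 0, 0;
    -4, 8, 5, 3, -4, 2, 2, -2, 0, 0, 0, 0, 0;
    -1, 1, 0, -1, -1, -1, 0, 1, 0, 0, 0, 0, 0;
    0, -1, 1, 3, 1, 1, -1, -3, 0, 0, 0, 0, 0;
    4, -8, -7, -5, 4, -3, -2, 3, 0, 0, 0, 0, 0;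
    -2, 5, 5, 4, -2, 3, 1, -3, 0, 0, 0, 0, 0;
    -2, 5, 4, 3, -2, 2, 2, -2, 0, 0, 0, 0, 0;
    3, -5, -5, -5, 2, -3, -1, 5, 0, 0, 0, 0, 0;
    1, -3, -4, -3, 1, -1, 0, 1, 0, 0, 0, 0, 0;
    -1, 2, 2, 3, 0, 2, 1, -3, 0, 0, 0, 0, 0;
    0, 0, 2, 2, 0, 1, -1, -2, 0, 0, 0, 0, 0;
    2, -2, -1, -2, 1, -1, 0, 3, 0, 0, 0, 0, 0;
    2, -2, -3, -3, 1, -1, 0, 2, 0, 0, 0, 0, 0]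

/-- The integral matrix `3 * G33⁻¹ * certS`. -/
def certB : Matrix (Fin 13) (Fin 5) ℤ :=
  !![7, -3, -2, 3, 5;
    -8, 2, 0, -2, -4;
    0, -2, -2, 0, 0;
    0, 3, 4, -3, -2;
    10, -4, -2, 2, 6;
    -7, 4, 3, -2, -4;
    -6, 3, 1, -1, -3;
    6, -5, -4, 4, 5;
    6, -2, -2, 1, 3;
    -2, 4, 2, -2, -2;
    -2, 2, 4, -2, -2;
    1, -2, -2, 4, 2;
    3, -2, -2, 2, 4]

/-- The integral matrix `(certP * G33) / 3`. -/
def certC : Matrix (Fin 5) (Fin 13) ℤ :=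
  !![0, 1, 1, 1, 0, 0, 0, 1, 1, 1, 1, 1, 0;
    1, 0, -1, -2, -2, -2, -2, 0, -1, 2, 1, -1, 0;
    -1, 1, 0, 1, 1, 0, 1, 1, 1, 0, 1, 1, 0;
    0, 1, -1, 0, 0, -1, -1, -1, 0, 0, 0, 1, 0;
    -2, -1, 2, 2, 0, 1, 1, 1, 1, 0, 0, 1, 2]

lemma certP_mul_certS : certP * certS = 1 := by decide +kernel

lemma certP_mul_G33 : certP * G33 = (3 : ℤ) • certC := by decide +kernel

lemma certS_mul_certP_add : certS * certP + G33 * certA = 1 := by decide +kernel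

lemma G33_mul_certB : G33 * certB = (3 : ℤ) • certS := by decide +kernel

/-- The map `x ↦ certP *ᵥ x` modulo 3, which identifies the cokernel of `G33` with `(ℤ/3ℤ)⁵`. -/
def discMap : (Fin 13 → ℤ) →ₗ[ℤ] (Fin 5 → ZMod 3) :=
  ((Int.castAddHom (ZMod 3)).toIntLinearMap.compLeft (Fin 5)) ∘ₗ certP.mulVecLin

lemma discMap_apply (x : Fin 13 → ℤ) (i : Fin 5) :
    discMap x i = (((certP *ᵥ x) i : ℤ) : ZMod 3) := rfl

lemma discMap_surjective : Function.Surjective discMap := by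
  intro z
  choose y hy using fun i => ZMod.intCast_surjective (z i)
  refine ⟨certS *ᵥ y, funext fun i => ?_⟩
  rw [discMap_apply, mulVec_mulVec, certP_mul_certS, one_mulVec, hy]

lemma range_G33_eq_ker_discMap : LinearMap.range G33.mulVecLin = LinearMap.ker discMap := by
  ext x
  rw [LinearMap.mem_range, LinearMap.mem_ker]
  constructor
  · rintro ⟨v, rfl⟩
    funext i
    rw [discMap_apply, mulVecLin_apply, mulVec_mulVec, certP_mul_G33, smul_mulVec, Pi.smul_apply,
      Pi.zero_apply, ZMod.intCast_zmod_eq_zero_iff_dvd]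
    exact Dvd.intro _ rfl
  · intro hx
    have hdvd : ∀ i, (3 : ℤ) ∣ (certP *ᵥ x) i := fun i =>
      (ZMod.intCast_zmod_eq_zero_iff_dvd _ 3).1 (congrFun hx i)
    choose y hy using hdvd
    have hPx : certP *ᵥ x = (3 : ℤ) • y := funext hy
    refine ⟨certB *ᵥ y + certA *ᵥ x, ?_⟩
    calc G33 *ᵥ (certB *ᵥ y + certA *ᵥ x)
        = certS *ᵥ ((3 : ℤ) • y) + (G33 * certA) *ᵥ x := by
          rw [mulVec_add, mulVec_mulVec, mulVec_mulVec, G33_mul_certB, smul_mulVec, mulVec_smul]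
      _ = (certS * certP + G33 * certA) *ᵥ x := by
          rw [← hPx, mulVec_mulVec, add_mulVec]
      _ = x := by rw [certS_mul_certP_add, one_mulVec]

/-- The discriminant group of the lattice with Gram matrix `G33`,
i.e. the cokernel `ℤ¹³/(G33·ℤ¹³)`, is isomorphic to `(ℤ/3ℤ)⁵`. -/
theorem stmt_4 :
    Nonempty (((Fin 13 → ℤ) ⧸ LinearMap.range G33.mulVecLin) ≃+ (Fin 5 → ZMod 3)) := by
  exact ⟨((Submodule.quotEquivOfEq _ _ range_G33_eq_ker_discMap).trans
    (discMap.quotKerEquivOfSurjective discMap_surjective)).toAddEquiv⟩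
end

section
/- Let G34 be the 19×19 symmetric integer matrix with rows [3,0,0,0,0,0,0,0,0,0,0,0,0,0,0,0,0,0,-1]; [0,4,-2,1,0,2,1,-2,0,2,-2,1,-1,-1,-2,-2,1,-1,2]; [0,-2,4,1,-3,-2,-1,2,2,-1,1,1,-1,-1,2,2,0,2,4]; [0,1,1,4,-4,-1,-1,1,2,1,1,2,0,-2,-1,1,1,2,6]; [0,0,-3,-4,8,2,0,-2,-2,-2,-1,-1,0,1,1,-2,-2,-2,-8]; [0,2,-2,-1,2,4,0,-2,-1,2,-2,-1,-1,0,0,-2,-1,-2,-2]; [0,1,-1,-1,0,0,4,-2,-2,1,-1,0,1,0,-1,0,2,-2,0]; [0,-2,2,1,-2,-2,-2,4,1,-1,1,0,0,1,0,2,0,2,1]; [0,0,2,2,-2,-1,-2,1,4,0,0,1,-2,-1,1,0,-1,2,4]; [0,2,-1,1,-2,2,1,-1,0,4,-2,0,0,0,-1,-1,0,-1,2]; [0,-2,1,1,-1,-2,-1,1,0,-2,4,0,2,0,0,2,0,2,1]; [0,1,1,2,-1,-1,0,0,1,0,0,4,0,-2,0,0,1,1,5]; [0,-1,-1,0,0,-1,1,0,-2,0,2,0,4,1,-1,1,0,0,-1];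 [0,-1,-1,-2,1,0,0,1,-1,0,0,-2,1,4,-1,0,-1,-1,-4]; [0,-2,2,-1,1,0,-1,0,1,-1,0,0,-1,-1,4,0,-2,0,-1]; [0,-2,2,1,-2,-2,0,2,0,-1,2,0,1,0,0,4,1,2,2]; [0,1,0,1,-2,-1,2,0,-1,0,0,1,0,-1,-2,1,4,0,3]; [0,-1,2,2,-2,-2,-2,2,2,-1,2,1,0,-1,0,2,0,4,4]; [-1,2,4,6,-8,-2,0,1,4,2,1,5,-1,-4,-1,2,3,4,15]. Then there is no vector v ∈ ℤ^19 with vᵀ·G34·v = 1. -/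
/-!
Let `η` be the first basis vector, so `η² = 3`, and let `a = ⟨η, v⟩`. The lattice has exactly
`243` vectors `x` with `x² = 3` and `⟨η, x⟩ = 1`. They are of the form `η / 3 + w` with
`w ⟂ η`, and the vectors `w` form a tight frame with barycentre `0` in the rank `18` space
orthogonal to `η`. Hence, writing `ℓ = ⟨x, v⟩`,

  `∑ ℓ = 81 a`  and  `∑ ℓ² = 36 v² + 15 a²`  (`frame_sum`, `frame_sum_sq`).

Suppose `v² = 1`. Then `∑ (3ℓ - a)² = 324 - 108 a²` is nonnegative, so `|a| ≤ 1`. The form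
is congruent to `a²` modulo `2` (`form_parity`), so `a = ±1`. But `ℓ` is an integer, so
`ℓ² ≥ ±ℓ`, and summing gives `51 = ∑ ℓ² ≥ 81`, a contradiction.
-/

open Matrix

def G34 : Matrix (Fin 19) (Fin 19) ℤ :=
  !![3, 0, 0, 0, 0, 0, 0, 0, 0, 0, 0, 0, 0, 0, 0, 0, 0, 0, -1;
    0, 4, -2, 1, 0, 2, 1, -2, 0, 2, -2, 1, -1, -1, -2, -2, 1, -1, 2;
    0, -2, 4, 1, -3, -2, -1, 2, 2, -1, 1, 1, -1, -1, 2, 2, 0, 2, 4;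
    0, 1, 1, 4, -4, -1, -1, 1, 2, 1, 1, 2, 0, -2, -1, 1, 1, 2, 6;
    0, 0, -3, -4, 8, 2, 0, -2, -2, -2, -1, -1, 0, 1, 1, -2, -2, -2, -8;
    0, 2, -2, -1, 2, 4, 0, -2, -1, 2, -2, -1, -1, 0, 0, -2, -1, -2, -2;
    0, 1, -1, -1, 0, 0, 4, -2, -2, 1, -1, 0, 1, 0, -1, 0, 2, -2, 0;
    0, -2, 2, 1, -2, -2, -2, 4, 1, -1, 1, 0, 0, 1, 0, 2, 0, 2, 1;
    0, 0, 2, 2, -2, -1, -2, 1, 4, 0, 0, 1, -2, -1, 1, 0, -1, 2, 4;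
    0, 2, -1, 1, -2, 2, 1, -1, 0, 4, -2, 0, 0, 0, -1, -1, 0, -1, 2;
    0, -2, 1, 1, -1, -2, -1, 1, 0, -2, 4, 0, 2, 0, 0, 2, 0, 2, 1;
    0, 1, 1, 2, -1, -1, 0, 0, 1, 0, 0, 4, 0, -2, 0, 0, 1, 1, 5;
    0, -1, -1, 0, 0, -1, 1, 0, -2, 0, 2, 0, 4, 1, -1, 1, 0, 0, -1;
    0, -1, -1, -2, 1, 0, 0, 1, -1, 0, 0, -2, 1, 4, -1, 0, -1, -1, -4;
    0, -2, 2, -1, 1, 0, -1, 0, 1, -1, 0, 0, -1, -1, 4, 0, -2, 0, -1;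
    0, -2, 2, 1, -2, -2, 0, 2, 0, -1, 2, 0, 1, 0, 0, 4, 1, 2, 2;
    0, 1, 0, 1, -2, -1, 2, 0, -1, 0, 0, 1, 0, -1, -2, 1, 4, 0, 3;
    0, -1, 2, 2, -2, -2, -2, 2, 2, -1, 2, 1, 0, -1, 0, 2, 0, 4, 4;
    -1, 2, 4, 6, -8, -2, 0, 1, 4, 2, 1, 5, -1, -4, -1, 2, 3, 4, 15]

/-- The functionals `⟨x, ·⟩` attached to the `243` vectors `x` with `x² = 3` and `⟨η, x⟩ = 1`.
Each functional is packed into one number: its `i`-th coefficient, which lies between `-4`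
and `4`, is the `i`-th base `9` digit minus `4`. -/
def frameCodes : List ℕ :=
   [41487314075274956, 56316558977564396, 58166468954796164, 191790096884336903,
    206405542627039229, 206408370409194263, 206428419419493524, 206637423820063448,
    208467278200834511, 210297707126545127, 221255408712463952, 221461017070589375,
    223105886648473829, 223289214755734985, 223517637876095384, 225121558313075774,
    225164797930684175, 341658506127391160, 341676327077688263, 341698924195537910,
    356523372004845128, 356525593479236255, 358333431872236520, 358333431872708255,
    358350970006114007, 358539357097819058, 358559089241270585, 358562230799866673,
    358582596715427459, 360392025901116272, 360414940272768248, 371347502138845295,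
    371533344270135242, 373386361355371562, 373406447901958106, 373409269141412507,
    373592252100051635, 373594825308675821, 375007819925757704, 375010358653951160,
    375216249833344778, 375216504317055545, 375236588195211866, 375259150832159048,
    375259433653898978, 375422395845599348, 375444989816313713, 375444992963448995,
    375462813913746098, 377066731208439785, 377295784619308970, 491565074724653216,
    506595127415333963, 506595444669136292, 506618289736629611, 506803529036435810,
    506823612914592131, 508242287469922754, 508425270428561882, 508445291922971855,
    508470710590283153, 508471027452891689, 508653755876276114, 508654010411530817,
    508654038697544309, 508654038698016044, 508654041840302747, 508676601334963226,
    508676918632285307, 510278008144823960, 510504516633554186, 510715777414098029,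
    521670936789218516, 523066135595353241, 523251942854546930, 523274854083912203,
    523274857226198906, 523478234343759323, 523478771648738285, 523686608453820461,
    523729847680235069, 525102769382503163, 525122501525954690, 525125046486369794,
    525125332019450345, 525145415897606666, 525310606187585339, 525310888617659741,
    525311143492564301, 525328964442861404, 525331223156800355, 525331478031704915,
    525333451254606923, 525333451255078658, 525351561560711051, 525353845413999947,
    525354100288904507, 525354382718978909, 525514523752411421, 525537086389830338,
    525537368819904740, 525537369211098533, 525537686073707069, 525539907548098196,
    525562219524061085, 527387596050938837, 540155071282230842, 540158212492286126,
    540386697991544294, 540386952475255061, 541985497065183020, 542008376999924018,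
    542010950208548204, 542193933167187332, 542214295992813173, 542216840953228277,
    658522479355552292, 658545324814239404, 660372643868038763, 660395551654079708,
    660579100161058301, 660599469218905790, 671536832443429262, 673369176000770051,
    673386714134175803, 673387000098202436, 673389538826395892, 673593456391221974,
    673595464051506695, 673595684489500277, 675194552527647803, 675196774002038930,
    675197373685915661, 675217143059886419, 675219970803765308, 675237791754062411,
    675382929934365518, 675402982044041084, 675426169160780126, 675428400711352382,
    675445628559144587, 675446165864123549, 675448481136743015, 675634005965862302,
    675634543270841264, 675674964791753702, 677070163597888427, 677256033566188382,
    677256319530215015, 677258512718120915, 677258541004606142, 677278878633681701,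
    677441840825382071, 679109022379229414, 679314630737354837, 690250020347310773,
    690250020738504566, 690270389796352055, 690270389796823790, 690272611270743182,
    690272865805997885, 692080449664215182, 692123092645838189, 692308617909671021,
    692309248578164777, 692328983825231807, 694142185238010464, 708983860521973496,
    808843598733306047, 810673487211279263, 823481666733207965, 825291472103679767,
    825291726587390534, 825334966204998935, 825495389668977584, 825497617766784152,
    825500156494977608, 825517952305924766, 825517980592409993, 825520525514548952,
    825520525515020687, 825520808336288882, 825522753612827255, 825523353296703986,
    825540574563124358, 825543402307003247, 825726416694414305, 825746720575378928,
    827141950039689644, 827142487344668606, 827350324149750782, 827350951297972865,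
    827370718308672071, 827370972843926774, 827373831232713863, 827393563376165390,
    827553701267311199, 827576898069037577, 827579119543428704, 827579436797231033,
    827785582460335418, 829201115805610757, 829386957936900704, 840341831778940640,
    841991816125114367, 842174544548498792, 842195451259866047, 842401028203037744,
    842403567352735922, 842403570495022625, 844050127723447982, 844231168496291504,
    844233996278446538, 844254045288274064, 844254045288745799, 844462795205604956,
    859286643331035443, 960579738903889175, 975408983806178615, 975612901762670225,
    975635213347439321, 975635213738633114, 975821020997826803, 977445273214830713,
    979524550455983978, 990645499413766076, 992269751682313922, 992312680967613419,
    992495663926252547, 992498519951768084, 992516058085173836, 992521082588715266,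
    994119661659545690, 994119978522154226, 994142823980841338, 994348401642514625,
    1009155052574089700, 1009172873524386803, 1009195470642236450, 1129390446110194724,
    1144423015866470876, 1159061621171351756, 1292478786183985781]

/-- The `i`-th coefficient of the functional packed in `c`. -/
def coeff (c : ℕ) (i : Fin 19) : ℤ := ((c / 9 ^ (i : ℕ) % 9 : ℕ) : ℤ) - 4

/-- The value at `v` of the functional packed in `c`. -/
def pairing (c : ℕ) (v : Fin 19 → ℤ) : ℤ := ∑ i, coeff c i * v i

/-- The coefficients of `⟨η, ·⟩`, the first row of `G34`. -/
def etaRow (i : Fin 19) : ℤ := G34 0 i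

/-- Half of the even symmetric form `G34 - etaRow ⊗ etaRow`, as an upper triangular matrix. -/
def halfForm (i j : Fin 19) : ℤ :=
  if i < j then G34 i j - etaRow i * etaRow j
  else if i = j then (G34 i i - etaRow i * etaRow i) / 2 else 0

set_option maxRecDepth 100000 in
lemma frame_gram : ∀ i j : Fin 19, (frameCodes.map fun c => coeff c i * coeff c j).sum =
    36 * G34 i j + 15 * (etaRow i * etaRow j) := by
  decide +kernel

set_option maxRecDepth 100000 in
lemma frame_barycentre : ∀ i : Fin 19, (frameCodes.map fun c => coeff c i).sum =
    81 * etaRow i := by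
  decide +kernel

set_option maxRecDepth 100000 in
lemma half_form_spec : ∀ i j : Fin 19,
    G34 i j - etaRow i * etaRow j = halfForm i j + halfForm j i := by
  decide +kernel

lemma form_eq_sum (v : Fin 19 → ℤ) :
    v ⬝ᵥ G34.mulVec v = ∑ i, ∑ j, G34 i j * (v i * v j) := by
  simp only [dotProduct, mulVec, Finset.mul_sum]
  exact Finset.sum_congr rfl fun i _ => Finset.sum_congr rfl fun j _ => by ring

lemma sq_sum_eq (f v : Fin 19 → ℤ) :
    (∑ i, f i * v i) ^ 2 = ∑ i, ∑ j, (f i * f j) * (v i * v j) := by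
  rw [sq, Finset.sum_mul_sum]
  exact Finset.sum_congr rfl fun i _ => Finset.sum_congr rfl fun j _ => by ring

lemma sum_pairing (l : List ℕ) (v : Fin 19 → ℤ) :
    (l.map fun c => pairing c v).sum = ∑ i, (l.map fun c => coeff c i).sum * v i := by
  induction l with
  | nil => simp
  | cons c l ih =>
    simp only [List.map_cons, List.sum_cons, ih, add_mul, Finset.sum_add_distrib]
    rw [pairing]

lemma sum_pairing_sq (l : List ℕ) (v : Fin 19 → ℤ) :
    (l.map fun c => pairing c v ^ 2).sum =
      ∑ i, ∑ j, (l.map fun c => coeff c i * coeff c j).sum * (v i * v j) := by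
  induction l with
  | nil => simp
  | cons c l ih =>
    simp only [List.map_cons, List.sum_cons, ih, add_mul, Finset.sum_add_distrib]
    rw [pairing, sq_sum_eq]

lemma frame_sum (v : Fin 19 → ℤ) :
    (frameCodes.map fun c => pairing c v).sum = 81 * ∑ i, etaRow i * v i := by
  simp only [sum_pairing, frame_barycentre, Finset.mul_sum, mul_assoc]

lemma frame_sum_sq (v : Fin 19 → ℤ) :
    (frameCodes.map fun c => pairing c v ^ 2).sum =
      36 * (v ⬝ᵥ G34.mulVec v) + 15 * (∑ i, etaRow i * v i) ^ 2 := by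
  simp only [sum_pairing_sq, frame_gram, form_eq_sum, sq_sum_eq, Finset.mul_sum,
    ← Finset.sum_add_distrib]
  exact Finset.sum_congr rfl fun i _ => Finset.sum_congr rfl fun j _ => by ring

/-- The form `v²` is congruent to `⟨η, v⟩²` modulo `2`. -/
lemma form_parity (v : Fin 19 → ℤ) :
    ∃ k, v ⬝ᵥ G34.mulVec v = (∑ i, etaRow i * v i) ^ 2 + 2 * k := by
  refine ⟨∑ i, ∑ j, halfForm i j * (v i * v j), ?_⟩
  have hswap : ∑ i, ∑ j, halfForm j i * (v i * v j) =
      ∑ i, ∑ j, halfForm i j * (v i * v j) := by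
    rw [Finset.sum_comm]
    exact Finset.sum_congr rfl fun i _ => Finset.sum_congr rfl fun j _ => by ring
  rw [form_eq_sum, sq_sum_eq, two_mul]
  nth_rewrite 2 [← hswap]
  simp only [← Finset.sum_add_distrib]
  refine Finset.sum_congr rfl fun i _ => Finset.sum_congr rfl fun j _ => ?_
  linear_combination (v i * v j) * half_form_spec i j

/-- A quadratic polynomial in the values of the functionals, summed over a list. -/
lemma sum_quadratic (l : List ℕ) (v : Fin 19 → ℤ) (p q r : ℤ) :
    (l.map fun c => p * pairing c v ^ 2 + q * pairing c v + r).sum =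
      p * (l.map fun c => pairing c v ^ 2).sum + q * (l.map fun c => pairing c v).sum
        + r * l.length := by
  induction l with
  | nil => simp
  | cons c l ih =>
    simp only [List.map_cons, List.sum_cons, List.length_cons, ih]
    push_cast
    ring

/-- Summing a quadratic polynomial that is nonnegative on the integers over the `243` values
`⟨x, v⟩` gives an inequality between `v²` and `⟨η, v⟩`. -/
lemma frame_nonneg (v : Fin 19 → ℤ) (p q r : ℤ) (h : ∀ t : ℤ, 0 ≤ p * t ^ 2 + q * t + r) :
    0 ≤ p * (36 * (v ⬝ᵥ G34.mulVec v) + 15 * (∑ i, etaRow i * v i) ^ 2)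
      + q * (81 * ∑ i, etaRow i * v i) + r * 243 := by
  have hlen : (frameCodes.length : ℤ) = 243 := by decide +kernel
  rw [← frame_sum_sq, ← frame_sum, ← hlen, ← sum_quadratic]
  refine List.sum_nonneg fun x hx => ?_
  obtain ⟨c, -, rfl⟩ := List.mem_map.1 hx
  exact h _

/-- The lattice with Gram matrix `G34` (the algebraic lattice of a
general cubic fourfold with symplectic automorphism `φ₃⁴`) has no vector of square 1. -/
theorem stmt_6 : ¬ ∃ v : Fin 19 → ℤ, v ⬝ᵥ G34.mulVec v = 1 := by
  rintro ⟨v, hv⟩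
  obtain ⟨k, hk⟩ := form_parity v
  have h1 := fun p q r => frame_nonneg v p q r
  rw [hv] at hk h1
  generalize ∑ i, etaRow i * v i = a at hk h1
  -- The three polynomials are `(3t - a)²`, `t² - t` and `t² + t`.
  have hcs := h1 9 (-6 * a) (a ^ 2) fun t => by nlinarith [sq_nonneg (3 * t - a)]
  have hpos := h1 1 (-1) 0 fun t => by
    rcases le_or_gt t 0 with ht | ht <;> nlinarith
  have hneg := h1 1 1 0 fun t => by
    rcases le_or_gt 0 t with ht | ht <;> nlinarith
  have hle : a ≤ 1 := by nlinarith
  have hge : -1 ≤ a := by nlinarith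
  interval_cases a <;> omega
end

section
/- In the polynomial ring ℂ[x₀,x₁,x₂,x₃,x₄,x₅], let σ be the ℂ-algebra automorphism determined by the substitution x₀ ↦ x₁, x₁ ↦ x₃, x₂ ↦ x₅, x₃ ↦ x₀, x₄ ↦ x₂, x₅ ↦ x₄, and for a primitive 7th root of unity ζ ∈ ℂ let ρ be the ℂ-algebra automorphism determined by x_i ↦ ζ^{i+1}·x_i for i = 0,…,5. Then for all a, b ∈ ℂ, the polynomial F = x₀²x₄ + x₁²x₂ + x₀x₂² + x₃²x₅ + x₃x₄² + x₁x₅² + a·x₀x₁x₃ + b·x₂x₄x₅ satisfies σ(F) = F and ρ(F) = F. -/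
/-!
The substitution permutes the six monomials of the form `x_i² x_j` of `F71 a b` in two 3-cycles and
fixes `x₀x₁x₃` and `x₂x₄x₅`. The diagonal map multiplies each monomial by `ζ` to the power of its
weight, where `x_i` has weight `i + 1`; every monomial of `F71 a b` has weight 7 or 14.
-/

open MvPolynomial

/-- The general equation of the family `F₇¹` of cubic fourfolds with a symplectic
automorphism of order 7. -/
noncomputable def F71 (a b : ℂ) : MvPolynomial (Fin 6) ℂ :=
  X 0 ^ 2 * X 4 + X 1 ^ 2 * X 2 + X 0 * X 2 ^ 2 + X 3 ^ 2 * X 5 + X 3 * X 4 ^ 2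
    + X 1 * X 5 ^ 2 + C a * (X 0 * X 1 * X 3) + C b * (X 2 * X 4 * X 5)

/-- `F71 a b` is invariant under the substitution
`x₀↦x₁, x₁↦x₃, x₂↦x₅, x₃↦x₀, x₄↦x₂, x₅↦x₄` (the order-3 automorphism τ) and under
`x_i ↦ ζ^{i+1}·x_i` for a primitive 7th root of unity ζ (the automorphism φ₇¹). -/
theorem stmt_17 (ζ : ℂ) (hζ : IsPrimitiveRoot ζ 7) (a b : ℂ) :
    rename (![1, 3, 5, 0, 2, 4] : Fin 6 → Fin 6) (F71 a b) = F71 a b ∧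
    aeval (fun i : Fin 6 => C (ζ ^ ((i : ℕ) + 1)) * X i) (F71 a b) = F71 a b := by
  constructor
  · simp [F71, rename_X]
    ring
  · have h : (C ζ : MvPolynomial (Fin 6) ℂ) ^ 7 = 1 := by
      rw [← C_pow, hζ.pow_eq_one, C_1]
    simp [F71, algebraMap_eq]
    -- Four monomials have weight 7 and four have weight 14, where `z ^ 14 - 1` is
    -- `(z ^ 7 + 1) * (z ^ 7 - 1)`.
    linear_combination
      (X 0 ^ 2 * X 4 + X 1 ^ 2 * X 2 + X 0 * X 2 ^ 2 + C a * (X 0 * X 1 * X 3)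
        + (C ζ ^ 7 + 1) * (X 3 ^ 2 * X 5 + X 3 * X 4 ^ 2 + X 1 * X 5 ^ 2
          + C b * (X 2 * X 4 * X 5))) * h
end

section
/- In the polynomial ring ℂ[x₀,x₁,x₂,x₃,x₄,x₅], consider F = x₀³ + x₁²x₅ + x₂²x₄ + x₂x₃² + x₁x₄² + x₃x₅². Let σ be the ℂ-algebra automorphism determined by the substitution x₀ ↦ x₀, x₁ ↦ x₂, x₂ ↦ x₅, x₃ ↦ x₁, x₄ ↦ x₃, x₅ ↦ x₄, and for a primitive 11th root of unity ζ ∈ ℂ let ρ be the ℂ-algebra automorphism determined by x₀ ↦ x₀, x₁ ↦ ζ·x₁, x₂ ↦ ζ³·x₂, x₃ ↦ ζ⁴·x₃, x₄ ↦ ζ⁵·x₄, x₅ ↦ ζ⁹·x₅. Then σ(F) = F and ρ(F) = F. -/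
open MvPolynomial

/-- The equation of the unique cubic fourfold in the family `F₁₁¹` (the triple cover
of `ℙ⁴` ramified along the Klein cubic threefold). -/
noncomputable def F111 : MvPolynomial (Fin 6) ℂ :=
  X 0 ^ 3 + X 1 ^ 2 * X 5 + X 2 ^ 2 * X 4 + X 2 * X 3 ^ 2 + X 1 * X 4 ^ 2 + X 3 * X 5 ^ 2

/-- `F111` is invariant under the substitution
`x₀↦x₀, x₁↦x₂, x₂↦x₅, x₃↦x₁, x₄↦x₃, x₅↦x₄` (the order-5 automorphism τ) and under
`x_i ↦ ζ^{w_i}·x_i` with weights `w = (0,1,3,4,5,9)` for a primitive 11th root of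
unity ζ (the symplectic automorphism φ₁₁¹). -/
theorem stmt_18 (ζ : ℂ) (hζ : IsPrimitiveRoot ζ 11) :
    rename (![0, 2, 5, 1, 3, 4] : Fin 6 → Fin 6) F111 = F111 ∧
    aeval (fun i : Fin 6 => C (ζ ^ (![0, 1, 3, 4, 5, 9] : Fin 6 → ℕ) i) * X i) F111
      = F111 := by
  constructor
  · simp [F111]
    ring
  · have h : (C ζ : MvPolynomial (Fin 6) ℂ) ^ 11 = 1 := by
      rw [← C_pow, hζ.pow_eq_one, C_1]
    simp [F111]
    -- Every monomial other than `x₀³` is scaled by `ζ ^ 11`, except `x₃x₅²`, whose weight is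
    -- `4 + 2 * 9 = 22`; it needs `ζ ^ 22 - 1 = (ζ ^ 11 + 1) * (ζ ^ 11 - 1)`.
    linear_combination (X 1 ^ 2 * X 5 + X 2 ^ 2 * X 4 + X 2 * X 3 ^ 2 + X 1 * X 4 ^ 2
      + (C ζ ^ 11 + 1) * X 3 * X 5 ^ 2) * h
end
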